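/- arXiv:1503.08845 — 2 statements merged into one kernel-verified Lean document; each statement's English description precedes it below -/
import Mathlib

section
/- For all i, j ∈ {1,2} and every point of Ω: ⟨∂i∂j y0, d0⟩ = Σ_{n,p=1}^{3} G_{np} Γ^n_{ij} Γ^p_{33} and ⟨∂i b0, ∂j b0⟩ = Σ_{n,p=1}^{3} G_{np} Γ^n_{i3} Γ^p_{j3}. -/
noncomputable section

open scoped Topology ENNReal
open Filter MeasureTheory

/-- Points of the midplate `Ω ⊆ ℝ²`. -/
abbrev E2 : Type := Fin 2 → ℝ
/-- Vectors in `ℝ³`. -/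
abbrev V3 : Type := Fin 3 → ℝ
/-- `3×3` real arrays. -/
abbrev M3 : Type := Fin 3 → Fin 3 → ℝ
/-- `2×2` real arrays. -/
abbrev M2 : Type := Fin 2 → Fin 2 → ℝ

/-- Partial derivative `∂ᵢ` of a scalar field on `ℝ²`. -/
def pd2 (i : Fin 2) (f : E2 → ℝ) (x : E2) : ℝ := fderiv ℝ f x (Pi.single i 1)

/-- Partial derivative `∂ᵢ` of an `ℝ³`-valued field on `ℝ²`. -/
def pdv (i : Fin 2) (f : E2 → V3) (x : E2) : V3 := fderiv ℝ f x (Pi.single i 1)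

/-- Euclidean inner product on `ℝ³`. -/
def dot3 (u v : V3) : ℝ := ∑ k, u k * v k

/-- Matrix product of `3×3` arrays. -/
def mmul (A B : M3) : M3 := fun i j => ∑ k, A i k * B k j

/-- Transpose of a `3×3` array. -/
def transp (A : M3) : M3 := fun i j => A j i

/-- The identity `3×3` array. -/
def idm : M3 := fun i j => if i = j then 1 else 0

/-- Frobenius norm of a `3×3` array. -/
def fnorm (A : M3) : ℝ := Real.sqrt (∑ i, ∑ j, (A i j) ^ 2)

/-- Symmetry of a `3×3` array. -/
def SymM (A : M3) : Prop := ∀ i j, A i j = A j i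

/-- Positive definiteness of a `3×3` array. -/
def PosDefM (A : M3) : Prop := ∀ v : V3, v ≠ 0 → 0 < ∑ i, ∑ j, v i * A i j * v j

/-- The special orthogonal group `SO(3)`. -/
def SO3 : Set M3 := {R | mmul (transp R) R = idm ∧ (Matrix.of R).det = 1}

/-- Entries of the inverse of a `3×3` array. -/
def minv (A : M3) : M3 := fun i j => (Matrix.of A)⁻¹ i j

/-- The columns `∂₁y₀, ∂₂y₀, b₀` of the matrix `Q₀`. -/
def Qcol (y0 b0 : E2 → V3) (x : E2) : Fin 3 → V3 := ![pdv 0 y0 x, pdv 1 y0 x, b0 x]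

/-- The determinant of `Q₀`. -/
def Qdet (y0 b0 : E2 → V3) (x : E2) : ℝ := (Matrix.of fun a j => Qcol y0 b0 x j a).det

/-- Partial derivatives `∂₁, ∂₂, ∂₃` of an `x₃`-independent scalar field (so `∂₃ = 0`). -/
def pd3 (k : Fin 3) (f : E2 → ℝ) (x : E2) : ℝ :=
  if h : (k : ℕ) < 2 then pd2 ⟨(k : ℕ), h⟩ f x else 0

/-- Christoffel symbols `Γ^n_{kl}` of the (`x₃`-independent) metric `G`. -/
def Gamma (G : E2 → M3) (n k l : Fin 3) (x : E2) : ℝ :=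
  (1 / 2) * ∑ s, minv (G x) n s *
    (pd3 k (fun y => G y s l) x + pd3 l (fun y => G y s k) x - pd3 s (fun y => G y k l) x)

/-- Covariant Riemann curvatures `R_{iklm}` of the (`x₃`-independent) metric `G`;
indices are `0`-based, so e.g. `R_{1313} = Riem G 0 2 0 2`. -/
def Riem (G : E2 → M3) (i k l m : Fin 3) (x : E2) : ℝ :=
  (1 / 2) * (pd3 k (fun y => pd3 l (fun z => G z i m) y) x
           + pd3 i (fun y => pd3 m (fun z => G z k l) y) x
           - pd3 k (fun y => pd3 m (fun z => G z i l) y) x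
           - pd3 i (fun y => pd3 l (fun z => G z k m) y) x)
    + ∑ n, ∑ p, G x n p *
        (Gamma G n k l x * Gamma G p i m x - Gamma G n k m x * Gamma G p i l x)

/-- The deformation gradient `∇u = [∂₁u | ∂₂u | ∂₃u]` of `u : Ω^h → ℝ³`. -/
def gradu (u : E2 × ℝ → V3) (x : E2 × ℝ) : M3 :=
  fun a j => ![fderiv ℝ u x (Pi.single 0 1, 0),
               fderiv ℝ u x (Pi.single 1 1, 0),
               fderiv ℝ u x (0, 1)] j a

/-- The elastic energy `E^h(u) = (1/h) ∫_{Ω × (-h/2,h/2)} W(∇u A⁻¹)`. -/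
def Eh (W : M3 → ℝ≥0∞) (A : E2 → M3) (Ω : Set E2) (h : ℝ) (u : E2 × ℝ → V3) : ℝ≥0∞ :=
  (ENNReal.ofReal h)⁻¹ *
    ∫⁻ x in Ω ×ˢ Set.Ioo (-(h / 2)) (h / 2), W (mmul (gradu u x) (minv (A x.1)))

/-- Symmetric part of a `3×3` array. -/
def symM (A : M3) : M3 := fun i j => (A i j + A j i) / 2
/-- Symmetric part of a `2×2` array. -/
def sym2M (A : M2) : M2 := fun i j => (A i j + A j i) / 2
/-- `F₂*`: the `3×3` array with principal `2×2` minor `F₂` and all other entries `0`. -/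
def put (F2 : M2) : M3 :=
  fun i j => if h : (i : ℕ) < 2 ∧ (j : ℕ) < 2 then F2 ⟨i, h.1⟩ ⟨j, h.2⟩ else 0
/-- The tensor product `c ⊗ e₃`. -/
def tene3 (c : V3) : M3 := fun i j => if j = 2 then c i else 0
/-- Cross product in `ℝ³`. -/
def cross (u v : V3) : V3 :=
  ![u 1 * v 2 - u 2 * v 1, u 2 * v 0 - u 0 * v 2, u 0 * v 1 - u 1 * v 0]
/-- The quadratic form `Q₃(F) = D²W(Id₃)(F,F)`, for a density `w`. -/
def Q3d (w : M3 → ℝ) (F : M3) : ℝ := fderiv ℝ (fun P => fderiv ℝ w P F) idm F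
/-- The reduced quadratic form `Q_{2,A}(x', F₂)`:
the infimum of `Q₃(A⁻¹ F̃ A⁻¹)` over all `F̃` whose principal `2×2` minor is `F₂`. -/
def QA (w : M3 → ℝ) (A : E2 → M3) (x : E2) (F2 : M2) : ℝ :=
  ⨅ Ft : {Ft : M3 // ∀ i j : Fin 2, Ft i.castSucc j.castSucc = F2 i j},
    Q3d w (mmul (minv (A x)) (mmul Ft.1 (minv (A x))))

/-- If `G = QᵀQ` with `Q` invertible, the inner product of two vectors is the `G`-product of
their coordinates in the basis of columns `q` of `Q`. -/
lemma dot3_eq_sum_coords (q : Fin 3 → V3) (g : M3)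
    (hdet : (Matrix.of fun a j => q j a).det ≠ 0)
    (hg : ∀ i j, dot3 (q i) (q j) = g i j) (u v : V3) (a b : V3)
    (ha : ∀ n, a n = ∑ s, minv g n s * dot3 (q s) u)
    (hb : ∀ n, b n = ∑ s, minv g n s * dot3 (q s) v) :
    dot3 u v = ∑ n, ∑ p, g n p * (a n * b p) := by
  set Q : Matrix (Fin 3) (Fin 3) ℝ := Matrix.of fun a j => q j a with hQ
  have hU : IsUnit Q.det := isUnit_iff_ne_zero.mpr hdet
  have hG : Matrix.of g = Q.transpose * Q := by
    ext i j
    simp [Matrix.mul_apply, hQ, ← hg i j, dot3]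
  have coords : ∀ w c : V3, (∀ n, c n = ∑ s, minv g n s * dot3 (q s) w) →
      w = Q.mulVec c := by
    intro w c hc
    have h : c = (Matrix.of g)⁻¹.mulVec (Q.transpose.mulVec w) := by
      ext n
      rw [hc n]
      simp [Matrix.mulVec, dotProduct, minv, dot3, hQ]
    rw [h, hG, Matrix.mul_inv_rev, Matrix.mulVec_mulVec, Matrix.mulVec_mulVec,
      Matrix.mul_assoc, Matrix.mul_assoc,
      Matrix.nonsing_inv_mul _ (by rwa [Matrix.det_transpose]),
      Matrix.mul_one, Matrix.mul_nonsing_inv _ hU, Matrix.one_mulVec]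
  have hu := coords u a ha
  have hv := coords v b hb
  rw [hu, hv]
  simp only [← hg]
  simp [dot3, Matrix.mulVec, dotProduct, hQ, Fin.sum_univ_three]
  ring

/-- Product rule for the Euclidean inner product. -/
lemma pd2_dot3 (k : Fin 2) {f g : E2 → V3} {x : E2}
    (hf : DifferentiableAt ℝ f x) (hg : DifferentiableAt ℝ g x) :
    pd2 k (fun y => dot3 (f y) (g y)) x =
      dot3 (pdv k f x) (g x) + dot3 (f x) (pdv k g x) := by
  have hf' := fun a => (hasFDerivAt_pi'.1 hf.hasFDerivAt a)
  have hg' := fun a => (hasFDerivAt_pi'.1 hg.hasFDerivAt a)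
  have h := HasFDerivAt.fun_sum (u := Finset.univ) fun a _ => (hf' a).fun_mul (hg' a)
  have e : (fun y => dot3 (f y) (g y)) = fun y => ∑ a, f y a * g y a := rfl
  rw [pd2, e, h.fderiv]
  simp [dot3, pdv, Fin.sum_univ_three]
  ring

lemma pdv_comm {f : E2 → V3} {x : E2} (hf : ContDiffAt ℝ 2 f x) (i j : Fin 2) :
    pdv i (fun y => pdv j f y) x = pdv j (fun y => pdv i f y) x := by
  have hd : DifferentiableAt ℝ (fderiv ℝ f) x :=
    (hf.fderiv_right (m := 1) (by norm_num)).differentiableAt (by simp)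
  have key : ∀ k l : Fin 2, pdv k (fun y => pdv l f y) x =
      fderiv ℝ (fderiv ℝ f) x (Pi.single k 1) (Pi.single l 1) := by
    intro k l
    unfold pdv
    rw [fderiv_clm_apply hd (by fun_prop)]
    simp
  rw [key, key]
  exact hf.isSymmSndFDerivAt (by simp) _ _

lemma differentiableAt_pdv {f : E2 → V3} {x : E2} (hf : ContDiffAt ℝ 2 f x)
    (j : Fin 2) : DifferentiableAt ℝ (fun y => pdv j f y) x := by
  have hd : DifferentiableAt ℝ (fderiv ℝ f) x :=
    (hf.fderiv_right (m := 1) (by norm_num)).differentiableAt (by simp)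
  unfold pdv
  fun_prop

lemma dot3_comm (u v : V3) : dot3 u v = dot3 v u := by
  simp [dot3, mul_comm]

lemma pd3_castSucc (k : Fin 2) (f : E2 → ℝ) (x : E2) : pd3 k.castSucc f x = pd2 k f x :=
  dif_pos k.isLt

lemma pd3_two (f : E2 → ℝ) (x : E2) : pd3 2 f x = 0 := by
  simp [pd3]

/-- A Christoffel symbol in terms of the symbols of the first kind. -/
lemma Gamma_eq_sum {G : E2 → M3} {x : E2} {k l : Fin 3} {c : V3}
    (h : ∀ s, pd3 k (fun y => G y s l) x + pd3 l (fun y => G y s k) x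
      - pd3 s (fun y => G y k l) x = 2 * c s) (n : Fin 3) :
    Gamma G n k l x = ∑ s, minv (G x) n s * c s := by
  simp only [Gamma, h, Finset.mul_sum]
  exact Finset.sum_congr rfl fun s _ => by ring

/-- `⟨∂ᵢ∂ⱼ y₀, d₀⟩ = Σ G_{np} Γ^n_{ij} Γ^p_{33}` and
`⟨∂ᵢ b₀, ∂ⱼ b₀⟩ = Σ G_{np} Γ^n_{i3} Γ^p_{j3}` on `Ω`. -/
theorem stmt10
    (Ω : Set E2) (hΩo : IsOpen Ω) (hΩb : Bornology.IsBounded Ω)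
    (hΩsc : SimplyConnectedSpace ↥Ω)
    (G : E2 → M3) (hGsm : ContDiffOn ℝ (⊤ : ℕ∞) G (closure Ω))
    (hGsym : ∀ x ∈ closure Ω, SymM (G x)) (hGpos : ∀ x ∈ closure Ω, PosDefM (G x))
    (y0 : E2 → V3) (hy0sm : ContDiffOn ℝ (⊤ : ℕ∞) y0 (closure Ω))
    (himm : ∀ x ∈ Ω, ∀ i j : Fin 2,
      dot3 (pdv i y0 x) (pdv j y0 x) = G x i.castSucc j.castSucc)
    (b0 : E2 → V3) (hb0sm : ContDiffOn ℝ (⊤ : ℕ∞) b0 (closure Ω))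
    (hQ0 : ∀ x ∈ Ω, ∀ i j : Fin 3,
      dot3 (Qcol y0 b0 x i) (Qcol y0 b0 x j) = G x i j)
    (hQdet : ∀ x ∈ Ω, 0 < Qdet y0 b0 x)
    (hsym0 : ∀ x ∈ Ω, ∀ i j : Fin 2,
      dot3 (pdv i y0 x) (pdv j b0 x) + dot3 (pdv j y0 x) (pdv i b0 x) = 0)
    (d0 : E2 → V3) (hd0sm : ContDiffOn ℝ (⊤ : ℕ∞) d0 (closure Ω))
    (hd0 : ∀ x ∈ Ω,
      (∀ i : Fin 2, dot3 (Qcol y0 b0 x i.castSucc) (d0 x) = - dot3 (pdv i b0 x) (b0 x)) ∧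
      dot3 (Qcol y0 b0 x 2) (d0 x) = 0)
 :
    ∀ x ∈ Ω, ∀ i j : Fin 2,
      dot3 (pdv i (fun y => pdv j y0 y) x) (d0 x) =
        (∑ n : Fin 3, ∑ p : Fin 3,
          G x n p * (Gamma G n i.castSucc j.castSucc x * Gamma G p 2 2 x)) ∧
      dot3 (pdv i b0 x) (pdv j b0 x) =
        (∑ n : Fin 3, ∑ p : Fin 3,
          G x n p * (Gamma G n i.castSucc 2 x * Gamma G p j.castSucc 2 x)) := by
  intro x hx i j
  have hN : Ω ∈ 𝓝 x := hΩo.mem_nhds hx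
  have hy : ContDiffAt ℝ 2 y0 x :=
    (hy0sm.contDiffAt (mem_of_superset hN subset_closure)).of_le (WithTop.coe_le_coe.2 le_top)
  have hbd : DifferentiableAt ℝ b0 x :=
    (hb0sm.contDiffAt (mem_of_superset hN subset_closure)).differentiableAt (by simp)
  have hyd := differentiableAt_pdv hy
  have pd2_congr : ∀ (k : Fin 2) (f g : E2 → ℝ), (∀ y ∈ Ω, f y = g y) →
      pd2 k f x = pd2 k g x := by
    intro k f g h
    have e : f =ᶠ[𝓝 x] g := mem_of_superset hN h
    rw [pd2, pd2, e.fderiv_eq]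
  have q_castSucc : ∀ y (k : Fin 2), Qcol y0 b0 y k.castSucc = pdv k y0 y := by
    intro y k
    fin_cases k <;> rfl
  have q_two : ∀ y, Qcol y0 b0 y 2 = b0 y := fun _ => rfl
  have dG : ∀ k s l : Fin 2, pd2 k (fun y => G y s.castSucc l.castSucc) x =
      dot3 (pdv k (fun y => pdv s y0 y) x) (pdv l y0 x)
        + dot3 (pdv s y0 x) (pdv k (fun y => pdv l y0 y) x) := fun k s l => by
    rw [← pd2_dot3 k (hyd s) (hyd l)]
    exact pd2_congr k _ _ fun y hy => (himm y hy s l).symm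
  have dG_left : ∀ k l : Fin 2, pd2 k (fun y => G y 2 l.castSucc) x =
      dot3 (pdv k b0 x) (pdv l y0 x)
        + dot3 (b0 x) (pdv k (fun y => pdv l y0 y) x) := fun k l => by
    rw [← pd2_dot3 k hbd (hyd l)]
    exact pd2_congr k _ _ fun y hy => by rw [← hQ0 y hy, q_castSucc, q_two]
  have dG_right : ∀ k l : Fin 2, pd2 k (fun y => G y l.castSucc 2) x =
      dot3 (pdv k (fun y => pdv l y0 y) x) (b0 x)
        + dot3 (pdv l y0 x) (pdv k b0 x) := fun k l => by
    rw [← pd2_dot3 k (hyd l) hbd]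
    exact pd2_congr k _ _ fun y hy => by rw [← hQ0 y hy, q_castSucc, q_two]
  have dG_two : ∀ k : Fin 2, pd2 k (fun y => G y 2 2) x =
      dot3 (pdv k b0 x) (b0 x) + dot3 (b0 x) (pdv k b0 x) := fun k => by
    rw [← pd2_dot3 k hbd hbd]
    exact pd2_congr k _ _ fun y hy => by rw [← hQ0 y hy, q_two]
  have gamma_tangent := Gamma_eq_sum (G := G) (x := x) (k := i.castSucc) (l := j.castSucc)
    (c := fun s => dot3 (Qcol y0 b0 x s) (pdv i (fun y => pdv j y0 y) x)) <| by
      intro s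
      refine Fin.lastCases ?_ (fun s => ?_) s
      · change pd3 _ (fun y => G y 2 _) x + pd3 _ (fun y => G y 2 _) x - pd3 2 _ x =
          2 * dot3 (b0 x) _
        rw [pd3_castSucc, pd3_castSucc, pd3_two, dG_left, dG_left, pdv_comm hy j i,
          dot3_comm (pdv i b0 x), dot3_comm (pdv j b0 x)]
        linarith [hsym0 x hx i j]
      · simp only [pd3_castSucc, dG, q_castSucc]
        rw [pdv_comm hy s i, pdv_comm hy s j, pdv_comm hy j i,
          dot3_comm (pdv i (fun y => pdv s y0 y) x), dot3_comm (pdv j (fun y => pdv s y0 y) x)]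
        linarith [dot3_comm (pdv i y0 x) (pdv j (fun y => pdv s y0 y) x),
          dot3_comm (pdv j y0 x) (pdv i (fun y => pdv s y0 y) x)]
  have gamma_mixed : ∀ k : Fin 2, ∀ n, Gamma G n k.castSucc 2 x =
      ∑ s, minv (G x) n s * dot3 (Qcol y0 b0 x s) (pdv k b0 x) := fun k =>
    Gamma_eq_sum <| by
      intro s
      refine Fin.lastCases ?_ (fun s => ?_) s
      · change pd3 _ (fun y => G y 2 2) x + pd3 2 _ x - pd3 2 _ x = 2 * dot3 (b0 x) _
        rw [pd3_castSucc, pd3_two, pd3_two, dG_two, dot3_comm (pdv k b0 x)]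
        ring
      · simp only [pd3_castSucc, pd3_two, dG_right, q_castSucc]
        rw [pdv_comm hy s k]
        linarith [hsym0 x hx s k]
  have gamma_normal := Gamma_eq_sum (G := G) (x := x) (k := 2) (l := 2)
    (c := fun s => dot3 (Qcol y0 b0 x s) (d0 x)) <| by
      intro s
      refine Fin.lastCases ?_ (fun s => ?_) s
      · change pd3 2 _ x + pd3 2 _ x - pd3 2 _ x = 2 * dot3 (Qcol y0 b0 x 2) _
        simp only [pd3_two, (hd0 x hx).2]
        ring
      · simp only [pd3_castSucc, pd3_two, dG_two, (hd0 x hx).1]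
        rw [dot3_comm (b0 x)]
        ring
  exact ⟨dot3_eq_sum_coords _ _ (hQdet x hx).ne' (hQ0 x hx) _ _
      (fun n => Gamma G n _ _ x) (fun n => Gamma G n _ _ x) gamma_tangent gamma_normal,
    dot3_eq_sum_coords _ _ (hQdet x hx).ne' (hQ0 x hx) _ _
      (fun n => Gamma G n _ _ x) (fun n => Gamma G n _ _ x) (gamma_mixed i) (gamma_mixed j)⟩
end
end

section
/- Let λ : Ω̄ → ℝ be smooth and strictly positive, set f = ½ log λ, and let G = λ Id₃. Suppose φ : Ω̄ → ℝ² is a smooth conformal immersion with (∇φ)ᵀ∇φ = λ Id₂, and let y0 = (φ, 0) : Ω̄ → ℝ³. Then y0 satisfies (∇y0)ᵀ∇y0 = G_{2×2} and sym((∇y0)ᵀ ∇b0) = 0 with b0 = √λ e₃; the associated field d0 equals d0 = −(∂1 f · ∂1 y0 + ∂2 f · ∂2 y0); moreover (∇b0)ᵀ∇b0 = e^{2f} ∇f ⊗ ∇f, the matrix (∇y0)ᵀ∇d0 is symmetric and equals −e^{2f} (∇²f + |∇f|² Id₂), and hence sym((∇y0)ᵀ ∇d0) + (∇b0)ᵀ∇b0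 = −e^{2f} (∇²f − ∇f ⊗ ∇f + |∇f|² Id₂). -/
noncomputable section

open scoped Topology ENNReal
open Filter MeasureTheory

/-- The conformal metric `λ Id₃`. -/
def Gconf (lam : E2 → ℝ) (x : E2) : M3 := fun i j => if i = j then lam x else 0
/-- The immersion `y₀ = (φ, 0)`. -/
def y0conf (phi : E2 → E2) (x : E2) : V3 := ![phi x 0, phi x 1, 0]
/-- The Cosserat field `b₀ = √λ e₃`. -/
def b0conf (lam : E2 → ℝ) (x : E2) : V3 := Real.sqrt (lam x) • ![0, 0, (1 : ℝ)]
/-- `f = ½ log λ`. -/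
def flog (lam : E2 → ℝ) (x : E2) : ℝ := (1 / 2) * Real.log (lam x)
/-- The field `d₀ = -(∂₁f ∂₁y₀ + ∂₂f ∂₂y₀)`. -/
def d0conf (lam : E2 → ℝ) (phi : E2 → E2) (x : E2) : V3 :=
  -(pd2 0 (flog lam) x • pdv 0 (y0conf phi) x + pd2 1 (flog lam) x • pdv 1 (y0conf phi) x)

theorem pdv_apply {F : E2 → V3} {x : E2} (h : DifferentiableAt ℝ F x) (i : Fin 2) (k : Fin 3) :
    pdv i F x k = pd2 i (fun y => F y k) x := by
  have hk := (hasFDerivAt_pi'.1 h.hasFDerivAt) k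
  simp [pdv, pd2, hk.fderiv]

theorem pdv_vec {g h : E2 → ℝ} {x : E2} (hg : DifferentiableAt ℝ g x)
    (hh : DifferentiableAt ℝ h x) (i : Fin 2) :
    pdv i (fun y => ![g y, h y, 0]) x = ![pd2 i g x, pd2 i h x, 0] := by
  have hd : DifferentiableAt ℝ (fun y => ![g y, h y, 0]) x := by
    refine differentiableAt_pi.2 fun k => ?_
    fin_cases k
    · exact hg
    · exact hh
    · exact differentiableAt_const 0
  ext k
  rw [pdv_apply hd]
  fin_cases k <;> simp [pd2]

theorem pd2_congr {g h : E2 → ℝ} {x : E2} (e : g =ᶠ[𝓝 x] h) (i : Fin 2) :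
    pd2 i g x = pd2 i h x := by
  simp [pd2, e.fderiv_eq]

theorem pd2_add {g h : E2 → ℝ} {x : E2} (hg : DifferentiableAt ℝ g x)
    (hh : DifferentiableAt ℝ h x) (i : Fin 2) :
    pd2 i (fun y => g y + h y) x = pd2 i g x + pd2 i h x := by
  simp [pd2, fderiv_fun_add hg hh]

theorem pd2_neg {g : E2 → ℝ} {x : E2} (i : Fin 2) :
    pd2 i (fun y => -g y) x = -pd2 i g x := by
  simp [pd2, fderiv_fun_neg]

theorem pd2_mul {g h : E2 → ℝ} {x : E2} (hg : DifferentiableAt ℝ g x)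
    (hh : DifferentiableAt ℝ h x) (i : Fin 2) :
    pd2 i (fun y => g y * h y) x = pd2 i g x * h x + g x * pd2 i h x := by
  simp [pd2, fderiv_fun_mul hg hh]
  ring

theorem pd2_add_mul {a b c d : E2 → ℝ} {x : E2} (ha : DifferentiableAt ℝ a x)
    (hb : DifferentiableAt ℝ b x) (hc : DifferentiableAt ℝ c x) (hd : DifferentiableAt ℝ d x)
    (i : Fin 2) :
    pd2 i (fun y => a y * b y + c y * d y) x =
      pd2 i a x * b x + a x * pd2 i b x + (pd2 i c x * d x + c x * pd2 i d x) := by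
  rw [pd2_add (ha.fun_mul hb) (hc.fun_mul hd), pd2_mul ha hb, pd2_mul hc hd]

theorem ContDiffAt.differentiableAt_pd2 {g : E2 → ℝ} {x : E2} (hg : ContDiffAt ℝ 2 g x)
    (i : Fin 2) : DifferentiableAt ℝ (fun y => pd2 i g y) x := by
  have h : DifferentiableAt ℝ (fderiv ℝ g) x :=
    (hg.fderiv_right (m := 1) (by norm_num)).differentiableAt one_ne_zero
  exact h.clm_apply (differentiableAt_const _)

theorem ContDiffAt.pd2_comm {g : E2 → ℝ} {x : E2} (hg : ContDiffAt ℝ 2 g x) (i j : Fin 2) :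
    pd2 i (fun y => pd2 j g y) x = pd2 j (fun y => pd2 i g y) x := by
  have h : DifferentiableAt ℝ (fderiv ℝ g) x :=
    (hg.fderiv_right (m := 1) (by norm_num)).differentiableAt one_ne_zero
  have hs := hg.isSymmSndFDerivAt (by simp)
  have key : ∀ v w : E2, fderiv ℝ (fun y => fderiv ℝ g y v) x w
      = fderiv ℝ (fderiv ℝ g) x w v := fun v w => by
    rw [fderiv_clm_apply h (differentiableAt_const v)]
    simp
  simp only [pd2, key]
  exact hs _ _

theorem exp_two_mul_flog {lam : E2 → ℝ} {x : E2} (h : 0 < lam x) :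
    Real.exp (2 * flog lam x) = lam x := by
  rw [flog, ← mul_assoc]
  norm_num [Real.exp_log h]

theorem ContDiffAt.flog {lam : E2 → ℝ} {x : E2} {n : ℕ∞} (h : ContDiffAt ℝ n lam x)
    (hx : 0 < lam x) : ContDiffAt ℝ n (flog lam) x :=
  contDiffAt_const.mul (h.log hx.ne')

theorem pd2_eq_two_mul_pd2_flog {lam : E2 → ℝ} {x : E2} (h : DifferentiableAt ℝ lam x)
    (hx : 0 < lam x) (i : Fin 2) : pd2 i lam x = 2 * lam x * pd2 i (flog lam) x := by
  have hf := (h.hasFDerivAt.log hx.ne').const_mul (1 / 2)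
  have : fderiv ℝ (flog lam) x = _ := hf.fderiv
  simp only [pd2, this]
  simp
  field_simp

theorem pdv_b0conf {lam : E2 → ℝ} {x : E2} (h : DifferentiableAt ℝ lam x)
    (hx : 0 < lam x) (i : Fin 2) :
    pdv i (b0conf lam) x = ![0, 0, Real.sqrt (lam x) * pd2 i (flog lam) x] := by
  have hs := (h.hasFDerivAt.sqrt hx.ne').smul_const (![0, 0, (1 : ℝ)] : V3)
  have e : fderiv ℝ (b0conf lam) x = _ := hs.fderiv
  have hl : fderiv ℝ lam x (Pi.single i 1) = _ := pd2_eq_two_mul_pd2_flog h hx i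
  have h0 : Real.sqrt (lam x) ≠ 0 := (Real.sqrt_pos.2 hx).ne'
  have h1 := Real.sq_sqrt hx.le
  rw [pdv, e]
  ext k
  fin_cases k <;> simp [hl]
  field_simp
  rw [h1]

/-- The Levi-Civita formula for the second derivatives of a conformal map of the plane. -/
theorem conformal_second_derivative {lam u v : E2 → ℝ} {x : E2}
    (hl : DifferentiableAt ℝ lam x) (hx : 0 < lam x)
    (hu : ContDiffAt ℝ 2 u x) (hv : ContDiffAt ℝ 2 v x)
    (hconf : ∀ᶠ y in 𝓝 x, ∀ i j : Fin 2,
      pd2 i u y * pd2 j u y + pd2 i v y * pd2 j v y = if i = j then lam y else 0)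
    (i j k : Fin 2) :
    pd2 i u x * pd2 j (fun y => pd2 k u y) x + pd2 i v x * pd2 j (fun y => pd2 k v y) x =
      lam x * (pd2 k (flog lam) x * (if i = j then 1 else 0) +
        pd2 j (flog lam) x * (if i = k then 1 else 0) -
        pd2 i (flog lam) x * (if k = j then 1 else 0)) := by
  have hD : ∀ i j l : Fin 2,
      pd2 l (fun y => pd2 i u y) x * pd2 j u x + pd2 i u x * pd2 l (fun y => pd2 j u y) x +
        (pd2 l (fun y => pd2 i v y) x * pd2 j v x + pd2 i v x * pd2 l (fun y => pd2 j v y) x) =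
      2 * lam x * pd2 l (flog lam) x * (if i = j then 1 else 0) := by
    intro i j l
    rw [← pd2_add_mul (hu.differentiableAt_pd2 i) (hu.differentiableAt_pd2 j)
      (hv.differentiableAt_pd2 i) (hv.differentiableAt_pd2 j),
      pd2_congr (hconf.mono fun y hy => hy i j)]
    split_ifs
    · rw [pd2_eq_two_mul_pd2_flog hl hx, mul_one]
    · simp [pd2]
  have h1 := hD i k j
  have h2 := hD i j k
  have h3 := hD k j i
  rw [hu.pd2_comm j i, hv.pd2_comm j i] at h1
  rw [hu.pd2_comm k i, hv.pd2_comm k i, hu.pd2_comm k j, hv.pd2_comm k j] at h2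
  linear_combination (h1 + h2 - h3) / 2

/-- For `G = λ Id₃` and a conformal immersion `φ` with `(∇φ)ᵀ∇φ = λ Id₂`:
`y₀ = (φ,0)` immerses `G₂ₓ₂` and satisfies (sym0) with `b₀ = √λ e₃`;
`d₀ = -(∂₁f ∂₁y₀ + ∂₂f ∂₂y₀)`; `(∇b₀)ᵀ∇b₀ = e^{2f} ∇f ⊗ ∇f`;
`(∇y₀)ᵀ∇d₀` is symmetric and equals `-e^{2f}(∇²f + |∇f|² Id₂)`; hence
`sym((∇y₀)ᵀ∇d₀) + (∇b₀)ᵀ∇b₀ = -e^{2f}(∇²f - ∇f ⊗ ∇f + |∇f|² Id₂)`. -/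
theorem stmt18
    (Ω : Set E2) (hΩo : IsOpen Ω) (hΩb : Bornology.IsBounded Ω)
    (hΩsc : SimplyConnectedSpace ↥Ω)
    (lam : E2 → ℝ) (hlamsm : ContDiffOn ℝ (⊤ : ℕ∞) lam (closure Ω))
    (hlampos : ∀ x ∈ closure Ω, 0 < lam x)
    (phi : E2 → E2) (hphism : ContDiffOn ℝ (⊤ : ℕ∞) phi (closure Ω))
    (hconf : ∀ x ∈ Ω, ∀ i j : Fin 2,
      (∑ k : Fin 2, fderiv ℝ phi x (Pi.single i 1) k * fderiv ℝ phi x (Pi.single j 1) k) =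
        if i = j then lam x else 0) :
    ∀ x ∈ Ω,
      (∀ i j : Fin 2,
        dot3 (pdv i (y0conf phi) x) (pdv j (y0conf phi) x) =
          Gconf lam x i.castSucc j.castSucc) ∧
      (∀ i j : Fin 2,
        dot3 (pdv i (y0conf phi) x) (pdv j (b0conf lam) x) +
          dot3 (pdv j (y0conf phi) x) (pdv i (b0conf lam) x) = 0) ∧
      (∀ i : Fin 2,
        dot3 (Qcol (y0conf phi) (b0conf lam) x i.castSucc) (d0conf lam phi x) =
          - dot3 (pdv i (b0conf lam) x) (b0conf lam x)) ∧
      dot3 (Qcol (y0conf phi) (b0conf lam) x 2) (d0conf lam phi x) = 0 ∧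
      (∀ i j : Fin 2,
        dot3 (pdv i (b0conf lam) x) (pdv j (b0conf lam) x) =
          Real.exp (2 * flog lam x) * (pd2 i (flog lam) x * pd2 j (flog lam) x)) ∧
      (∀ i j : Fin 2,
        dot3 (pdv i (y0conf phi) x) (pdv j (d0conf lam phi) x) =
          dot3 (pdv j (y0conf phi) x) (pdv i (d0conf lam phi) x)) ∧
      (∀ i j : Fin 2,
        dot3 (pdv i (y0conf phi) x) (pdv j (d0conf lam phi) x) =
          -(Real.exp (2 * flog lam x)) *
            (pd2 i (fun y => pd2 j (flog lam) y) x +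
              ((pd2 0 (flog lam) x) ^ 2 + (pd2 1 (flog lam) x) ^ 2) *
                (if i = j then 1 else 0))) ∧
      (∀ i j : Fin 2,
        (dot3 (pdv i (y0conf phi) x) (pdv j (d0conf lam phi) x) +
            dot3 (pdv j (y0conf phi) x) (pdv i (d0conf lam phi) x)) / 2 +
          dot3 (pdv i (b0conf lam) x) (pdv j (b0conf lam) x) =
        -(Real.exp (2 * flog lam x)) *
          (pd2 i (fun y => pd2 j (flog lam) y) x -
            pd2 i (flog lam) x * pd2 j (flog lam) x +
            ((pd2 0 (flog lam) x) ^ 2 + (pd2 1 (flog lam) x) ^ 2) *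
              (if i = j then 1 else 0))) := by
  intro x hx
  have hnhds : Ω ∈ 𝓝 x := hΩo.mem_nhds hx
  have hcl : ∀ y ∈ Ω, closure Ω ∈ 𝓝 y := fun y hy =>
    mem_of_superset (hΩo.mem_nhds hy) subset_closure
  have hpos : 0 < lam x := hlampos x (subset_closure hx)
  have hle : (2 : WithTop ℕ∞) ≤ ((⊤ : ℕ∞) : WithTop ℕ∞) :=
    WithTop.coe_le_coe.2 (le_top : (2 : ℕ∞) ≤ ⊤)
  have hlam : ContDiffAt ℝ 2 lam x := (hlamsm.contDiffAt (hcl x hx)).of_le hle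
  have hlamd : DifferentiableAt ℝ lam x := hlam.differentiableAt two_ne_zero
  have hf : ContDiffAt ℝ 2 (flog lam) x := ContDiffAt.flog (n := 2) hlam hpos
  have hphi : ∀ y ∈ Ω, ContDiffAt ℝ 2 phi y := fun y hy =>
    (hphism.contDiffAt (hcl y hy)).of_le hle
  have hcomp : ∀ y ∈ Ω, ∀ k, ContDiffAt ℝ 2 (fun z => phi z k) y := fun y hy =>
    contDiffAt_pi.1 (hphi y hy)
  have hy0 : ∀ y ∈ Ω, ∀ i, pdv i (y0conf phi) y =
      ![pd2 i (fun z => phi z 0) y, pd2 i (fun z => phi z 1) y, 0] := fun y hy =>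
    pdv_vec ((hcomp y hy 0).differentiableAt two_ne_zero)
      ((hcomp y hy 1).differentiableAt two_ne_zero)
  have hphid : ∀ y ∈ Ω, ∀ i k,
      fderiv ℝ phi y (Pi.single i 1) k = pd2 i (fun z => phi z k) y := fun y hy i k => by
    have h := hasFDerivAt_pi'.1 ((hphi y hy).differentiableAt two_ne_zero).hasFDerivAt k
    simp [pd2, h.fderiv]
  generalize hu : (fun z => phi z 0) = u at hy0
  generalize hv : (fun z => phi z 1) = v at hy0
  have hu2 : ContDiffAt ℝ 2 u x := hu ▸ hcomp x hx 0
  have hv2 : ContDiffAt ℝ 2 v x := hv ▸ hcomp x hx 1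
  have hc : ∀ y ∈ Ω, ∀ i j : Fin 2,
      pd2 i u y * pd2 j u y + pd2 i v y * pd2 j v y = if i = j then lam y else 0 := by
    intro y hy i j
    rw [← hconf y hy i j, Fin.sum_univ_two]
    simp only [hphid y hy, hu, hv]
  have hC := conformal_second_derivative hlamd hpos hu2 hv2
    (mem_of_superset hnhds fun y hy => hc y hy)
  have hb := pdv_b0conf hlamd hpos
  have hsq := Real.mul_self_sqrt hpos.le
  have hd0 : ∀ y ∈ Ω, d0conf lam phi y =
      ![-(pd2 0 (flog lam) y * pd2 0 u y + pd2 1 (flog lam) y * pd2 1 u y),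
        -(pd2 0 (flog lam) y * pd2 0 v y + pd2 1 (flog lam) y * pd2 1 v y), 0] := by
    intro y hy
    ext k
    rw [d0conf, hy0 y hy, hy0 y hy]
    fin_cases k <;> simp
  have hfd := hf.differentiableAt_pd2
  have hud := hu2.differentiableAt_pd2
  have hvd := hv2.differentiableAt_pd2
  have hdd : ∀ j, pdv j (d0conf lam phi) x =
      ![pd2 j (fun y => -(pd2 0 (flog lam) y * pd2 0 u y + pd2 1 (flog lam) y * pd2 1 u y)) x,
        pd2 j (fun y => -(pd2 0 (flog lam) y * pd2 0 v y + pd2 1 (flog lam) y * pd2 1 v y)) x,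
        0] := fun j => by
    rw [pdv, Filter.EventuallyEq.fderiv_eq (mem_of_superset hnhds hd0)]
    exact pdv_vec (((hfd 0).mul (hud 0)).add ((hfd 1).mul (hud 1))).neg
      (((hfd 0).mul (hvd 0)).add ((hfd 1).mul (hvd 1))).neg j
  have hyd : ∀ i j : Fin 2, dot3 (pdv i (y0conf phi) x) (pdv j (d0conf lam phi) x) =
      -(Real.exp (2 * flog lam x)) * (pd2 i (fun y => pd2 j (flog lam) y) x +
        ((pd2 0 (flog lam) x) ^ 2 + (pd2 1 (flog lam) x) ^ 2) * (if i = j then 1 else 0)) := by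
    intro i j
    rw [hy0 x hx, hdd, pd2_neg, pd2_neg, pd2_add_mul (hfd 0) (hud 0) (hfd 1) (hud 1),
      pd2_add_mul (hfd 0) (hvd 0) (hfd 1) (hvd 1), exp_two_mul_flog hpos, hf.pd2_comm i j]
    simp only [dot3, Fin.sum_univ_three, Matrix.cons_val]
    have h0 := hC i j 0
    have h1 := hC i j 1
    have g0 := hc x hx i 0
    have g1 := hc x hx i 1
    trans -(pd2 j (fun y => pd2 0 (flog lam) y) x * (if i = 0 then lam x else 0) +
      pd2 j (fun y => pd2 1 (flog lam) y) x * (if i = 1 then lam x else 0) +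
      pd2 0 (flog lam) x * (pd2 i u x * pd2 j (fun y => pd2 0 u y) x +
        pd2 i v x * pd2 j (fun y => pd2 0 v y) x) +
      pd2 1 (flog lam) x * (pd2 i u x * pd2 j (fun y => pd2 1 u y) x +
        pd2 i v x * pd2 j (fun y => pd2 1 v y) x))
    · rw [← g0, ← g1]
      ring
    · rw [h0, h1]
      fin_cases i <;> fin_cases j <;> simp <;> ring
  have hbb : ∀ i j : Fin 2, dot3 (pdv i (b0conf lam) x) (pdv j (b0conf lam) x) =
      Real.exp (2 * flog lam x) * (pd2 i (flog lam) x * pd2 j (flog lam) x) := by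
    intro i j
    rw [hb, hb, exp_two_mul_flog hpos]
    simp only [dot3, Fin.sum_univ_three, Matrix.cons_val]
    linear_combination pd2 i (flog lam) x * pd2 j (flog lam) x * hsq
  have hsymm : ∀ i j : Fin 2, dot3 (pdv i (y0conf phi) x) (pdv j (d0conf lam phi) x) =
      dot3 (pdv j (y0conf phi) x) (pdv i (d0conf lam phi) x) := by
    intro i j
    rw [hyd, hyd, hf.pd2_comm i j]
    simp only [eq_comm]
  refine ⟨fun i j => ?_, fun i j => ?_, fun i => ?_, ?_, hbb, hsymm, hyd, fun i j => ?_⟩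
  · rw [hy0 x hx, hy0 x hx]
    simpa [dot3, Fin.sum_univ_three, Gconf] using hc x hx i j
  · rw [hy0 x hx, hy0 x hx, hb, hb]
    simp [dot3, Fin.sum_univ_three]
  · have hQ : Qcol (y0conf phi) (b0conf lam) x i.castSucc = pdv i (y0conf phi) x := by
      fin_cases i <;> rfl
    have g0 := hc x hx i 0
    have g1 := hc x hx i 1
    rw [hQ, hy0 x hx, hd0 x hx, hb, b0conf]
    simp only [dot3, Fin.sum_univ_three, Matrix.cons_val, Pi.smul_apply, smul_eq_mul]
    trans -(pd2 0 (flog lam) x * (if i = 0 then lam x else 0) +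
      pd2 1 (flog lam) x * (if i = 1 then lam x else 0))
    · rw [← g0, ← g1]
      ring
    · rw [← hsq]
      fin_cases i <;> simp <;> ring
  · rw [hd0 x hx]
    simp [dot3, Fin.sum_univ_three, Qcol, b0conf]
  · rw [← hsymm i j, hyd, hbb]
    ring
end
end
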